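/- Let Ω be real-analytic on a neighborhood of the origin in ℝ³ with Ω(0) = 0, ∂ᵢΩ(0) = 0, ∂ᵢ∂ⱼΩ(0) = 2δᵢⱼ, and suppose that for every n ≥ 3 the symmetric trace-free part of ∂_{j₁}⋯∂_{jₙ}Ω vanishes at 0. Then Ω = r²·f_Ω on a neighborhood of the origin, where f_Ω is real-analytic, f_Ω(0) = 1, and r² = x₁² + x₂² + x₃². -/

import Mathlib

/-- The partial derivative `∂ᵢ f` in Cartesian coordinates on ℝ³. -/
noncomputable def pd (i : Fin 3) (f : (Fin 3 → ℝ) → ℝ) (x : Fin 3 → ℝ) : ℝ :=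
  fderiv ℝ f x (Pi.single i 1)

open Finset in
lemma polar_formula {E : Type*} [AddCommGroup E] [Module ℝ E] (m : ℕ)
    (q : MultilinearMap ℝ (fun _ : Fin m => E) ℝ)
    (hs : ∀ (σ : Equiv.Perm (Fin m)) (v : Fin m → E), q (fun i => v (σ i)) = q v)
    (v : Fin m → E) :
    (m.factorial : ℝ) * q v = ∑ s : Finset (Fin m), (-1 : ℝ) ^ (sᶜ).card *
      q (fun _ => ∑ i ∈ s, v i) := by
  classical
  have e1 : ∀ s : Finset (Fin m), q (fun _ => ∑ i ∈ s, v i) =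
      ∑ r : Fin m → Fin m, if (∀ j, r j ∈ s) then q (fun j => v (r j)) else 0 := by
    intro s
    rw [q.map_sum_finset (fun _ i => v i) (fun _ => s), ← Finset.sum_filter]
    apply Finset.sum_congr _ (fun _ _ => rfl)
    ext r; simp
  have e2 : ∀ r : Fin m → Fin m, (∑ s : Finset (Fin m), (-1 : ℝ) ^ (sᶜ).card *
      (if (∀ j, r j ∈ s) then (1:ℝ) else 0)) = if Function.Surjective r then 1 else 0 := by
    intro r
    have h := Finset.prod_add (fun _ => (1:ℝ)) (fun i => if i ∈ Set.range r then (0:ℝ) else -1)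
      (Finset.univ : Finset (Fin m))
    have h' : (∏ i : Fin m, ((1:ℝ) + if i ∈ Set.range r then (0:ℝ) else -1)) =
        if Function.Surjective r then 1 else 0 := by
      split_ifs with hr
      · apply Finset.prod_eq_one
        intro i _
        rw [if_pos (Set.mem_range.2 (hr i))]; simp
      · simp only [Function.Surjective, not_forall] at hr
        obtain ⟨i, hi⟩ := hr
        apply Finset.prod_eq_zero (Finset.mem_univ i)
        rw [if_neg (by simpa using hi)]; simp
    rw [← h', h, Finset.powerset_univ]
    apply Finset.sum_congr rfl
    intro s _
    simp only [Finset.prod_const_one, one_mul, ← Finset.compl_eq_univ_sdiff]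
    split_ifs with hr
    · rw [mul_one, Finset.prod_congr rfl (g := fun _ => (-1:ℝ))]
      · simp
      · intro i hi
        rw [if_neg]
        rintro ⟨j, rfl⟩
        exact (Finset.mem_compl.1 hi) (hr j)
    · push Not at hr
      obtain ⟨j, hj⟩ := hr
      rw [mul_zero, eq_comm]
      apply Finset.prod_eq_zero (Finset.mem_compl.2 hj)
      simp
  have e3 : ∑ s : Finset (Fin m), (-1 : ℝ) ^ (sᶜ).card * q (fun _ => ∑ i ∈ s, v i)
      = ∑ r : Fin m → Fin m, (if Function.Surjective r then 1 else 0) * q (fun j => v (r j)) := by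
    simp_rw [e1, ← e2, Finset.mul_sum, Finset.sum_mul]
    rw [Finset.sum_comm]
    refine Finset.sum_congr rfl fun r _ => Finset.sum_congr rfl fun s _ => ?_
    split_ifs <;> simp
  rw [e3, ← Finset.sum_of_injOn (s := (Finset.univ : Finset (Equiv.Perm (Fin m))))
    (f := fun _ => q v) (fun σ => (σ : Fin m → Fin m))]
  · simp [Finset.card_univ, Fintype.card_perm]
  · intro a _ b _ h; exact DFunLike.coe_injective h
  · intro a _; simp
  · intro r _ hr
    rw [if_neg, zero_mul]
    intro hsu
    apply hr
    exact ⟨Equiv.ofBijective r (Finite.surjective_iff_bijective.1 hsu), by simp, rfl⟩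
  · intro σ _
    rw [if_pos σ.surjective, one_mul, hs]

lemma polar_bound {E : Type*} [NormedAddCommGroup E] [NormedSpace ℝ E] (m : ℕ)
    (q : ContinuousMultilinearMap ℝ (fun _ : Fin m => E) ℝ)
    (hs : ∀ (σ : Equiv.Perm (Fin m)) (v : Fin m → E), q (fun i => v (σ i)) = q v)
    (M : ℝ) (hM : 0 ≤ M) (hb : ∀ x, |q (fun _ => x)| ≤ M * ‖x‖ ^ m) :
    ‖q‖ ≤ M * (2 * Real.exp 1) ^ m := by
  have key : ∀ v : Fin m → E, (∀ i, ‖v i‖ ≤ 1) → |q v| ≤ M * (2 * Real.exp 1) ^ m := by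
    intro v hv
    have h := polar_formula m q.toMultilinearMap hs v
    have hf : (0:ℝ) < m.factorial := by positivity
    have h2 : (m.factorial : ℝ) * |q v| ≤ 2 ^ m * (M * m ^ m) := by
      rw [← abs_of_pos hf, ← abs_mul]
      refine (congrArg abs h).trans_le ?_
      refine (Finset.abs_sum_le_sum_abs _ _).trans ?_
      refine (Finset.sum_le_card_nsmul _ _ (M * m ^ m) ?_).trans (by simp)
      intro s _
      rw [abs_mul, abs_pow, abs_neg, abs_one, one_pow, one_mul]
      refine (hb _).trans ?_
      gcongr
      refine (norm_sum_le _ _).trans ?_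
      refine (Finset.sum_le_card_nsmul _ _ 1 (fun i _ => hv i)).trans ?_
      simp only [nsmul_eq_mul, mul_one]
      exact_mod_cast (Finset.card_le_univ s).trans (by simp)
    have h3 : (m:ℝ) ^ m ≤ Real.exp 1 ^ m * m.factorial := by
      have := Real.pow_div_factorial_le_exp (m:ℝ) (by positivity) m
      rw [div_le_iff₀ hf] at this
      rwa [← Real.exp_nat_mul, mul_one]
    refine le_of_mul_le_mul_left (h2.trans ?_) hf
    calc (2:ℝ) ^ m * (M * m ^ m) ≤ 2 ^ m * (M * (Real.exp 1 ^ m * m.factorial)) := by gcongr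
      _ = _ := by rw [mul_pow]; ring
  refine q.opNorm_le_bound (by positivity) ?_
  intro v
  by_cases h0 : ∃ i, v i = 0
  · obtain ⟨i, hi⟩ := h0
    rw [q.map_coord_zero i hi, norm_zero]; positivity
  · push Not at h0
    have : v = fun i => ‖v i‖ • (‖v i‖⁻¹ • v i) := by
      ext1 i
      rw [smul_smul, mul_inv_cancel₀ (norm_ne_zero_iff.2 (h0 i)), one_smul]
    rw [this, q.map_smul_univ, norm_smul, ← this, mul_comm, norm_prod]
    simp only [norm_norm]
    gcongr
    apply key
    intro i
    rw [norm_smul, norm_inv, norm_norm, inv_mul_cancel₀ (norm_ne_zero_iff.2 (h0 i))]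

open scoped ContDiff in
lemma polar_exists {E : Type*} [NormedAddCommGroup E] [NormedSpace ℝ E] (m : ℕ)
    (Q : E → ℝ) (hQ : ContDiff ℝ ω Q) (hh : ∀ (t : ℝ) x, Q (t • x) = t ^ m * Q x)
    (M : ℝ) (hM : 0 ≤ M) (hb : ∀ x, |Q x| ≤ M * ‖x‖ ^ m) :
    ∃ q : ContinuousMultilinearMap ℝ (fun _ : Fin m => E) ℝ, (∀ x, q (fun _ => x) = Q x) ∧
      ‖q‖ ≤ M * (2 * Real.exp 1) ^ m := by
  have hd : ∀ x, ((m.factorial : ℝ)⁻¹ • iteratedFDeriv ℝ m Q 0) (fun _ => x) = Q x := by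
    intro x
    have h1 := (ContinuousLinearMap.toSpanSingleton ℝ x).iteratedFDeriv_comp_right hQ 0
      (i := m) (by exact_mod_cast le_top)
    have h2 : iteratedDeriv m (Q ∘ (ContinuousLinearMap.toSpanSingleton ℝ x)) 0 =
        m.factorial * Q x := by
      have : (Q ∘ (ContinuousLinearMap.toSpanSingleton ℝ x)) = fun t : ℝ => t ^ m * Q x := by
        ext t; simp [hh]
      rw [this, iteratedDeriv_mul_const_field, iteratedDeriv_fun_pow_zero]
      simp
    rw [iteratedDeriv_eq_iteratedFDeriv, h1] at h2
    simp at h2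
    simp [h2]
    field_simp
  refine ⟨(m.factorial : ℝ)⁻¹ • iteratedFDeriv ℝ m Q 0, hd, polar_bound m _ ?_ M hM ?_⟩
  · intro σ v
    have := (hQ.contDiffAt (x := 0)).iteratedFDeriv_comp_perm (n := m) v σ
    simp only [_root_.smul_apply]
    rw [← this]
    rfl
  · intro x; rw [hd]; exact hb x

lemma forall_of_ne_zero (P : (Fin 3 → ℝ) → Prop) (hc : IsClosed {x | P x})
    (h : ∀ x, x ≠ 0 → P x) : ∀ x, P x := by
  have : Dense ({0}ᶜ : Set (Fin 3 → ℝ)) := dense_compl_singleton 0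
  intro x
  exact (hc.closure_subset_iff.2 (fun y hy => h y hy)) (this x)

lemma norm_sq_le (x : Fin 3 → ℝ) : ‖x‖ ^ 2 ≤ ∑ i, x i ^ 2 := by
  have h : ‖x‖ ≤ √(∑ i, x i ^ 2) := by
    rw [pi_norm_le_iff_of_nonneg (by positivity)]
    intro i
    rw [Real.norm_eq_abs]
    apply Real.abs_le_sqrt
    exact Finset.single_le_sum (f := fun i => x i ^ 2) (fun i _ => sq_nonneg _) (Finset.mem_univ i)
  have h0 : 0 ≤ ∑ i, x i ^ 2 := Finset.sum_nonneg (fun i _ => sq_nonneg _)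
  calc ‖x‖ ^ 2 ≤ √(∑ i, x i ^ 2) ^ 2 := by gcongr
    _ = _ := Real.sq_sqrt h0

open scoped ContDiff in
lemma contDiff_eval (Q : MvPolynomial (Fin 3) ℝ) :
    ContDiff ℝ ω (fun x : Fin 3 → ℝ => MvPolynomial.eval x Q) :=
  (AnalyticOnNhd.eval_mvPolynomial (𝕜 := ℝ) Q).contDiff

/-- The quotient of a homogeneous term by `r²`, with norm bound. -/
lemma quotient_exists (n : ℕ) (p : ContinuousMultilinearMap ℝ (fun _ : Fin (n+2) => Fin 3 → ℝ) ℝ)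
    (Q : MvPolynomial (Fin 3) ℝ)
    (hQ : ∀ x, p (fun _ => x) = (∑ i, x i ^ 2) * MvPolynomial.eval x Q) :
    ∃ q : ContinuousMultilinearMap ℝ (fun _ : Fin n => Fin 3 → ℝ) ℝ,
      (∀ x, p (fun _ => x) = (∑ i, x i ^ 2) * q (fun _ => x)) ∧
      ‖q‖ ≤ ‖p‖ * (2 * Real.exp 1) ^ n := by
  have hcd := contDiff_eval Q
  have hc : Continuous (fun x : Fin 3 → ℝ => MvPolynomial.eval x Q) := hcd.continuous
  have hpos : ∀ x : Fin 3 → ℝ, x ≠ 0 → 0 < ∑ i, x i ^ 2 := fun x hx =>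
    lt_of_lt_of_le (by have := norm_pos_iff.2 hx; positivity) (norm_sq_le x)
  refine (polar_exists n (fun x => MvPolynomial.eval x Q) hcd ?_ ‖p‖ (norm_nonneg _) ?_).imp
    (fun q h => ⟨fun x => by rw [hQ, h.1], h.2⟩)
  · intro t
    have key : ∀ s : ℝ, s ≠ 0 → ∀ x : Fin 3 → ℝ,
        MvPolynomial.eval (s • x) Q = s ^ n * MvPolynomial.eval x Q := by
      intro s hs
      refine forall_of_ne_zero _ (isClosed_eq (hc.comp (by fun_prop)) (by fun_prop)) ?_
      intro x hx
      have hh := hQ (s • x)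
      have : p (fun _ => s • x) = s ^ (n+2) * p (fun _ => x) := by
        have := p.map_smul_univ (fun _ => s) (fun _ => x)
        simpa using this
      rw [this, hQ] at hh
      have e : ∑ i, (s • x) i ^ 2 = s ^ 2 * ∑ i, x i ^ 2 := by
        simp [mul_pow, Finset.mul_sum]
      rw [e] at hh
      have hx' := (hpos x hx).ne'
      have hne : s ^ 2 * ∑ i, x i ^ 2 ≠ 0 := by positivity
      apply mul_left_cancel₀ hne
      rw [← hh]; ring
    intro x
    have hd : Dense ({0}ᶜ : Set ℝ) := dense_compl_singleton 0
    have hcl : IsClosed {s : ℝ | MvPolynomial.eval (s • x) Q = s ^ n * MvPolynomial.eval x Q} :=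
      isClosed_eq (hc.comp (by fun_prop)) (by fun_prop)
    exact (hcl.closure_subset_iff.2 (fun s hs => key s hs x)) (hd t)
  · refine forall_of_ne_zero _ (isClosed_le (by fun_prop) (by fun_prop)) ?_
    intro x hx
    have h := p.le_opNorm (fun _ => x)
    rw [hQ, Real.norm_eq_abs, abs_mul, abs_of_pos (hpos x hx)] at h
    simp only [Finset.prod_const, Finset.card_univ, Fintype.card_fin] at h
    have hn := norm_pos_iff.2 hx
    have h3 : ‖x‖ ^ 2 * |MvPolynomial.eval x Q| ≤ ‖x‖ ^ 2 * (‖p‖ * ‖x‖ ^ n) := by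
      calc _ ≤ (∑ i, x i ^ 2) * |MvPolynomial.eval x Q| := by gcongr; exact norm_sq_le x
        _ ≤ _ := h
        _ = _ := by ring
    exact le_of_mul_le_mul_left h3 (by positivity)

/-- if `Ω` is real-analytic near `0 ∈ ℝ³` with `Ω(0) = 0`,
`∂ᵢΩ(0) = 0`, `∂ᵢ∂ⱼΩ(0) = 2δᵢⱼ`, and for every `n ≥ 3` the symmetric trace-free
part of `∂_{j₁}⋯∂_{jₙ}Ω(0)` vanishes (encoded as: the homogeneous polynomial
`x ↦ ∂ⁿΩ(0)(x,…,x)` is divisible by `r² = ∑ xᵢ²`), then `Ω = r² f_Ω` near the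
origin with `f_Ω` analytic and `f_Ω(0) = 1`. -/
theorem Omega_eq_r_sq_mul_analytic
    (Ω : (Fin 3 → ℝ) → ℝ) (hΩ : AnalyticAt ℝ Ω 0)
    (h0 : Ω 0 = 0)
    (h1 : ∀ i, pd i Ω 0 = 0)
    (h2 : ∀ i j, pd i (pd j Ω) 0 = if i = j then 2 else 0)
    (htf : ∀ n : ℕ, 3 ≤ n → ∃ Q : MvPolynomial (Fin 3) ℝ, ∀ x : Fin 3 → ℝ,
      iteratedFDeriv ℝ n Ω 0 (fun _ => x) = (∑ i, x i ^ 2) * MvPolynomial.eval x Q) :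
    ∃ fΩ : (Fin 3 → ℝ) → ℝ, AnalyticAt ℝ fΩ 0 ∧ fΩ 0 = 1 ∧
      ∀ᶠ x in nhds (0 : Fin 3 → ℝ), Ω x = (∑ i, x i ^ 2) * fΩ x := by
  obtain ⟨p, R, hp⟩ := hΩ
  have hA : AnalyticAt ℝ Ω 0 := ⟨p, R, hp⟩
  have hfac : ∀ n x, p n (fun _ => x) =
      ((n.factorial : ℝ))⁻¹ * iteratedFDeriv ℝ n Ω 0 (fun _ => x) := by
    intro n x
    rw [← hp.factorial_smul x n, nsmul_eq_mul, inv_mul_cancel_left₀ (by positivity)]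
  have hsum : ∀ x : Fin 3 → ℝ, x = ∑ i, x i • (Pi.single i 1 : Fin 3 → ℝ) := fun x => by
    ext j; simp [Finset.sum_apply, Pi.single_apply]
  have hP0 : ∀ x, p 0 (fun _ => x) = 0 := by
    intro x; rw [hfac]; simp [h0]
  have hP1 : ∀ x, p 1 (fun _ => x) = 0 := by
    intro x
    rw [hfac, iteratedFDeriv_one_apply, hsum x, map_sum]
    simp only [map_smul]
    simp only [pd] at h1
    simp [h1]
  have hP2 : ∀ x, p 2 (fun _ => x) = ∑ i, x i ^ 2 := by
    intro x
    have hd : DifferentiableAt ℝ (fderiv ℝ Ω) 0 := hA.fderiv.differentiableAt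
    have e : ∀ i j, fderiv ℝ (fderiv ℝ Ω) 0 (Pi.single i 1) (Pi.single j 1) =
        if i = j then 2 else 0 := by
      intro i j
      rw [← h2 i j]
      have e1 : pd j Ω = fun y => fderiv ℝ Ω y (Pi.single j 1) := rfl
      rw [e1, pd, fderiv_clm_apply hd (differentiableAt_const _)]
      simp
    rw [hfac, iteratedFDeriv_two_apply]
    have e2 : fderiv ℝ (fderiv ℝ Ω) 0 x x = ∑ i, x i ^ 2 * 2 := by
      conv_lhs => rw [hsum x]
      simp only [map_sum, map_smul, _root_.sum_apply, _root_.smul_apply, e]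
      refine Finset.sum_congr rfl fun i _ => ?_
      simp
      ring
    rw [e2, ← Finset.sum_mul]
    simp [Nat.factorial]
    ring
  have hQ : ∀ n, ∃ Q : MvPolynomial (Fin 3) ℝ, ∀ x, p (n+2) (fun _ => x) =
      (∑ i, x i ^ 2) * MvPolynomial.eval x Q := by
    intro n
    rcases n with _ | n
    · exact ⟨1, fun x => by rw [hP2]; simp⟩
    · obtain ⟨Q, hQ⟩ := htf (n+1+2) (by omega)
      refine ⟨MvPolynomial.C (((n+1+2).factorial : ℝ)⁻¹) * Q, fun x => ?_⟩
      rw [hfac, hQ]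
      simp only [map_mul, MvPolynomial.eval_C]
      ring
  choose Q hQ using hQ
  have hq := fun n => quotient_exists n (p (n+2)) (Q n) (hQ n)
  choose q hq1 hq2 using hq
  obtain ⟨r, hr0, hrR⟩ := ENNReal.lt_iff_exists_nnreal_btwn.1 hp.r_pos
  obtain ⟨C, hC, hpC⟩ := p.norm_mul_pow_le_of_lt_radius (lt_of_lt_of_le hrR hp.r_le)
  have hr : (0:ℝ) < r := by exact_mod_cast hr0
  let qs : FormalMultilinearSeries ℝ (Fin 3 → ℝ) ℝ := q
  let ρ : NNReal := ⟨r / (2 * Real.exp 1), by positivity⟩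
  have hρ : 0 < ρ := by
    have : 0 < r / (2 * Real.exp 1) := by positivity
    exact this
  have hrad : (ρ : ENNReal) ≤ qs.radius := by
    apply qs.le_radius_of_bound (C / r ^ 2)
    intro n
    have he : (ρ : ℝ) = r / (2 * Real.exp 1) := rfl
    rw [he, le_div_iff₀ (by positivity)]
    calc ‖qs n‖ * (r / (2 * Real.exp 1)) ^ n * r ^ 2
        ≤ (‖p (n+2)‖ * (2 * Real.exp 1) ^ n) * (r / (2 * Real.exp 1)) ^ n * r ^ 2 := by
          gcongr; exact hq2 n
      _ = ‖p (n+2)‖ * r ^ (n+2) := by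
          rw [div_pow]; field_simp; ring
      _ ≤ C := hpC _
  have hradpos : 0 < qs.radius := lt_of_lt_of_le (by exact_mod_cast hρ) hrad
  have hqs := qs.hasFPowerSeriesOnBall hradpos
  refine ⟨qs.sum, hqs.analyticAt, ?_, ?_⟩
  · have hz : qs.sum 0 = q 0 (fun _ => 0) := (hqs.coeff_zero _).symm
    have h := hq1 0 (Pi.single 0 1)
    rw [hP2] at h
    have hne : ∑ i, (Pi.single 0 1 : Fin 3 → ℝ) i ^ 2 = 1 := by
      simp [Pi.single_apply]
    rw [hne, one_mul] at h
    rw [hz, h]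
    congr 1
    ext i; exact i.elim0
  · filter_upwards [Metric.eball_mem_nhds 0 hradpos, Metric.eball_mem_nhds 0 hp.r_pos] with x hx hx'
    have s1 := (hqs.hasSum hx).mul_left (∑ i, x i ^ 2)
    have s2 := hp.hasSum hx'
    rw [zero_add] at s1 s2
    have s3 := (hasSum_nat_add_iff' 2).2 s2
    simp only [Finset.sum_range_succ, Finset.sum_range_zero, hP0, hP1, add_zero, sub_zero] at s3
    refine s3.unique ?_
    have hfun : (fun n => p (n+2) (fun _ => x)) =
        fun n => (∑ i, x i ^ 2) * qs n (fun _ => x) := funext fun n => hq1 n x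
    rw [hfun]
    exact s1
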